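/- Let n ≥ 2 be an integer, δ ∈ (0,1], let d ≥ 1 and q ≥ 0 be integers, β ≥ 1, α1 ∈ (0,1) and α2 > 0. Let x ∈ {0,1}^n and let ρ_1,…,ρ_n be reals with |ρ_j| ≤ (q+1)·β·n^q for every j. Let γ ≥ 6(d+1)(q+1)β/(α1²·α2), let r = ⌈γ·n^{1−δ}·ln n⌉, and let R_1,…,R_r be drawn independently and uniformly at random (with replacement) from {1,…,n}. Set ρ = (n/r)·Σ_{l=1}^r ρ_{R_l}·x_{R_l}, ρ̂ = Σ_{j=1}^n ρ_j·x_j, and ρ̄ = Σ_{j=1}^n |ρ_j|. Then with probability at least 1 − 4/n^{d+1}: ρ̂ − α1·ρ̄ − 2·α2·n^{q+δ} ≤ ρ ≤ ρ̂ + α1·ρ̄ + 2·α2·n^{q+δ}. -/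

import Mathlib

/-!
Since `exp y ≤ 1 + y + y ^ 2` for `|y| ≤ 1`, and `y ^ 2 ≤ |y| * sup |y|`, the moment generating
function of one sampled term is controlled by the mean of `b` and the mean of `|b|`. Chernoff's
method at the parameter `t = α / M`, where `|b j| ≤ M`, makes the second-order term cancel exactly
against the relative error `α * ∑ j, |b j|`, so that the absolute error `U` alone pays for the
failure probability `exp (-(r * α * U / (n * M)))`. The lower tail is the upper tail of `-b`; as the
bound involves only `|b|`, there is no need to separate positive and negative coefficients.
-/

section Sampling

open Finset Real

variable {ι : Type*} [Fintype ι] {r : ℕ}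

/-- The estimate of `∑ j, b j` from the sample `R` of `r` indices drawn with replacement: the sample
mean of `b`, scaled by the size of the population. For `r = 0` it takes the junk value `0`. -/
noncomputable def sampleEstimate (b : ι → ℝ) (R : Fin r → ι) : ℝ :=
  ((Fintype.card ι : ℝ) / r) * ∑ l, b (R l)

theorem sampleEstimate_neg (b : ι → ℝ) (R : Fin r → ι) :
    sampleEstimate (fun j => -b j) R = -sampleEstimate b R := by
  simp [sampleEstimate]

theorem card_le_sum_mul_exp_le_sum_exp_pow (b : ι → ℝ) (T : ℝ) :
    (#{R : Fin r → ι | T ≤ ∑ l, b (R l)} : ℝ) * exp T ≤ (∑ j, exp (b j)) ^ r := by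
  rw [Fintype.sum_pow, ← nsmul_eq_mul]
  refine (card_nsmul_le_sum _ (fun R => ∏ l, exp (b (R l))) _ fun R hR => ?_).trans
    (sum_le_univ_sum_of_nonneg fun R => by positivity)
  rw [← exp_sum]
  exact exp_le_exp.2 (mem_filter.1 hR).2

theorem sum_exp_le_card_mul_exp [Nonempty ι] {b : ι → ℝ} (hb : ∀ j, |b j| ≤ 1) :
    ∑ j, exp (b j) ≤
      Fintype.card ι * exp ((∑ j, b j + ∑ j, b j ^ 2) / Fintype.card ι) := by
  have exp_le (j : ι) : exp (b j) ≤ 1 + b j + b j ^ 2 := by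
    linarith [(abs_le.1 (abs_exp_sub_one_sub_id_le (hb j))).2]
  calc ∑ j, exp (b j)
      ≤ ∑ j, (1 + b j + b j ^ 2) := sum_le_sum fun j _ => exp_le j
    _ = Fintype.card ι * ((∑ j, b j + ∑ j, b j ^ 2) / Fintype.card ι + 1) := by
        simp only [sum_add_distrib, sum_const, card_univ, nsmul_eq_mul]
        field_simp
        ring
    _ ≤ _ := by gcongr; exact add_one_le_exp _

theorem card_le_sum_le_exp [Nonempty ι] {b : ι → ℝ} (hb : ∀ j, |b j| ≤ 1) (T : ℝ) :
    (#{R : Fin r → ι | T ≤ ∑ l, b (R l)} : ℝ) ≤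
      (Fintype.card ι : ℝ) ^ r *
        exp (r * ((∑ j, b j + ∑ j, b j ^ 2) / Fintype.card ι) - T) := by
  rw [exp_sub, ← mul_div_assoc, le_div_iff₀ (exp_pos T), exp_nat_mul, ← mul_pow]
  exact (card_le_sum_mul_exp_le_sum_exp_pow b T).trans
    (pow_le_pow_left₀ (by positivity) (sum_exp_le_card_mul_exp hb) r)

theorem sum_sq_le_mul_sum_abs {b : ι → ℝ} {M : ℝ} (hb : ∀ j, |b j| ≤ M) :
    ∑ j, b j ^ 2 ≤ M * ∑ j, |b j| := by
  rw [mul_sum]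
  refine sum_le_sum fun j _ => ?_
  rw [← sq_abs, sq]
  exact mul_le_mul_of_nonneg_right (hb j) (abs_nonneg _)

section Tails

variable [Nonempty ι] {b : ι → ℝ} {M W α : ℝ}

theorem card_sum_add_le_sampleEstimate_le (hr : 0 < r) (hM : 0 < M) (hb : ∀ j, |b j| ≤ M)
    (hW : ∑ j, |b j| ≤ W) (hα : 0 ≤ α) (hα1 : α ≤ 1) (U : ℝ) :
    (#{R : Fin r → ι | ∑ j, b j + (α * W + U) ≤ sampleEstimate b R} : ℝ) ≤
      (Fintype.card ι : ℝ) ^ r * exp (-(r * α * U / (Fintype.card ι * M))) := by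
  set n : ℝ := (Fintype.card ι : ℝ) with hn
  have n_pos : 0 < n := by positivity
  set t := α / M with ht
  set T := t * (r / n * (∑ j, b j + (α * W + U))) with hT
  have scaled_le_one (j : ι) : |t * b j| ≤ 1 := by
    rw [abs_mul, abs_of_nonneg (by positivity : 0 ≤ t), ht, div_mul_eq_mul_div, div_le_one hM]
    exact (mul_le_of_le_one_left (abs_nonneg _) hα1).trans (hb j)
  have event_imp (R : Fin r → ι) (hR : ∑ j, b j + (α * W + U) ≤ sampleEstimate b R) :
      T ≤ ∑ l, t * b (R l) := by
    calc T ≤ t * (r / n * sampleEstimate b R) := by rw [hT]; gcongr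
      _ = t * ∑ l, b (R l) := by rw [sampleEstimate, ← hn]; field_simp
      _ = ∑ l, t * b (R l) := mul_sum ..
  have exponent_le :
      r * ((∑ j, t * b j + ∑ j, (t * b j) ^ 2) / n) - T ≤ -(r * α * U / (n * M)) := by
    have second_order : ∑ j, (t * b j) ^ 2 ≤ t ^ 2 * (M * W) := by
      simp only [mul_pow, ← mul_sum]
      gcongr
      exact (sum_sq_le_mul_sum_abs hb).trans (by gcongr)
    calc r * ((∑ j, t * b j + ∑ j, (t * b j) ^ 2) / n) - T
        ≤ r * ((t * ∑ j, b j + t ^ 2 * (M * W)) / n) - T := by rw [← mul_sum]; gcongr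
      _ = -(r * α * U / (n * M)) := by rw [hT, ht]; field_simp; ring
  calc (#{R : Fin r → ι | ∑ j, b j + (α * W + U) ≤ sampleEstimate b R} : ℝ)
      ≤ #{R : Fin r → ι | T ≤ ∑ l, t * b (R l)} :=
        Nat.cast_le.2 (card_le_card (monotone_filter_right univ fun R _ => event_imp R))
    _ ≤ n ^ r * exp (r * ((∑ j, t * b j + ∑ j, (t * b j) ^ 2) / n) - T) :=
        card_le_sum_le_exp scaled_le_one T
    _ ≤ n ^ r * exp (-(r * α * U / (n * M))) := by gcongr

theorem card_lt_abs_sampleEstimate_sub_sum_le (hr : 0 < r) (hM : 0 < M) (hb : ∀ j, |b j| ≤ M)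
    (hW : ∑ j, |b j| ≤ W) (hα : 0 ≤ α) (hα1 : α ≤ 1) (U : ℝ) :
    (#{R : Fin r → ι | α * W + U < |sampleEstimate b R - ∑ j, b j|} : ℝ) ≤
      2 * ((Fintype.card ι : ℝ) ^ r * exp (-(r * α * U / (Fintype.card ι * M)))) := by
  classical
  let upper : Finset (Fin r → ι) := {R | ∑ j, b j + (α * W + U) ≤ sampleEstimate b R}
  let lower : Finset (Fin r → ι) :=
    {R | ∑ j, -b j + (α * W + U) ≤ sampleEstimate (fun j => -b j) R}
  have subset_union :
      ({R | α * W + U < |sampleEstimate b R - ∑ j, b j|} : Finset (Fin r → ι)) ⊆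
        upper ∪ lower := by
    intro R
    simp only [upper, lower, mem_union, mem_filter_univ, lt_abs, sampleEstimate_neg,
      sum_neg_distrib]
    rintro (h | h)
    · exact .inl (by linarith)
    · exact .inr (by linarith)
  have card_upper := card_sum_add_le_sampleEstimate_le hr hM hb hW hα hα1 U
  have card_lower := card_sum_add_le_sampleEstimate_le (b := fun j => -b j) hr hM
    (by simpa only [abs_neg] using hb) (by simpa only [abs_neg] using hW) hα hα1 U
  have card_le : (#{R : Fin r → ι | α * W + U < |sampleEstimate b R - ∑ j, b j|} : ℝ) ≤
      #upper + #lower := by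
    exact_mod_cast (card_le_card subset_union).trans (card_union_le upper lower)
  linarith

theorem one_sub_two_mul_exp_le_card_abs_sampleEstimate_sub_sum_le_div (hr : 0 < r) (hM : 0 < M)
    (hb : ∀ j, |b j| ≤ M) (hW : ∑ j, |b j| ≤ W) (hα : 0 ≤ α) (hα1 : α ≤ 1) (U : ℝ) :
    1 - 2 * exp (-(r * α * U / (Fintype.card ι * M))) ≤
      (#{R : Fin r → ι | |sampleEstimate b R - ∑ j, b j| ≤ α * W + U} : ℝ) /
        (Fintype.card ι : ℝ) ^ r := by
  have card_add_card : (#{R : Fin r → ι | |sampleEstimate b R - ∑ j, b j| ≤ α * W + U} : ℝ) +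
      #{R : Fin r → ι | α * W + U < |sampleEstimate b R - ∑ j, b j|} =
        (Fintype.card ι : ℝ) ^ r := by
    simp only [← not_le]
    exact_mod_cast (card_filter_add_card_filter_not _).trans (by simp)
  rw [le_div_iff₀ (by positivity)]
  linarith [card_lt_abs_sampleEstimate_sub_sum_le hr hM hb hW hα hα1 U]

end Tails

theorem exp_neg_le_one_div_pow {y a : ℝ} {k : ℕ} (hy : 0 < y) (h : k * log y ≤ a) :
    exp (-a) ≤ 1 / y ^ k := by
  calc exp (-a) ≤ exp (-(k * log y)) := by gcongr
    _ = 1 / y ^ k := by rw [exp_neg, exp_nat_mul, exp_log hy, one_div]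

theorem rpow_one_sub_mul_rpow_add {y : ℝ} (hy : 0 < y) (q : ℕ) (δ : ℝ) :
    y ^ (1 - δ) * y ^ (q + δ) = y * y ^ q := by
  rw [← rpow_add hy, show 1 - δ + (q + δ) = 1 + q by ring, rpow_add hy, rpow_one, rpow_natCast]

theorem mul_log_le_of_mul_rpow_mul_log_le {y s k K α1 α2 γ δ : ℝ} {q : ℕ} (hy : 1 ≤ y)
    (hK : 0 < K) (hα1 : 0 < α1) (hα2 : 0 < α2) (hγ : k * K / (2 * α1 * α2) ≤ γ)
    (hs : γ * y ^ (1 - δ) * log y ≤ s) :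
    k * log y ≤ s * α1 * (2 * α2 * y ^ (q + δ)) / (y * (K * y ^ q)) := by
  have hlog : 0 ≤ log y := log_nonneg hy
  rw [div_le_iff₀ (by positivity)] at hγ
  rw [le_div_iff₀ (by positivity)]
  calc k * log y * (y * (K * y ^ q)) = k * K * (log y * (y * y ^ q)) := by ring
    _ ≤ γ * (2 * α1 * α2) * (log y * (y * y ^ q)) := by gcongr
    _ = γ * y ^ (1 - δ) * log y * α1 * (2 * α2 * y ^ (q + δ)) := by
        rw [← rpow_one_sub_mul_rpow_add (by positivity) q δ]; ring
    _ ≤ s * α1 * (2 * α2 * y ^ (q + δ)) := by gcongr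

end Sampling

theorem sampling_lemma_general_general {ι : Type*} [Fintype ι] {n r d q : ℕ} {δ K α1 α2 γ : ℝ}
    (hcard : Fintype.card ι = n) (hn : 2 ≤ n) (hK : 0 < K) (hα1 : 0 < α1) (hα1' : α1 ≤ 1)
    (hα2 : 0 < α2) (hγ : ((d : ℝ) + 1) * K / (2 * α1 * α2) ≤ γ)
    {x ρc : ι → ℝ} (hx : ∀ i, |x i| ≤ 1) (hρc : ∀ j, |ρc j| ≤ K * (n : ℝ) ^ q)
    (hr : γ * (n : ℝ) ^ (1 - δ) * Real.log n ≤ r) :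
    (1 : ℝ) - 2 / (n : ℝ) ^ (d + 1) ≤
      ((Finset.univ.filter fun R : Fin r → ι =>
          (∑ j, ρc j * x j) - α1 * (∑ j, |ρc j|) - 2 * α2 * (n : ℝ) ^ ((q : ℝ) + δ) ≤
            ((n : ℝ) / r) * ∑ l, ρc (R l) * x (R l) ∧
          ((n : ℝ) / r) * ∑ l, ρc (R l) * x (R l) ≤
            (∑ j, ρc j * x j) + α1 * (∑ j, |ρc j|) + 2 * α2 * (n : ℝ) ^ ((q : ℝ) + δ)).card : ℝ) /
        (n : ℝ) ^ r := by
  subst hcard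
  have : Nonempty ι := Fintype.card_pos_iff.1 (by lia)
  have one_lt_card : (1 : ℝ) < Fintype.card ι := by exact_mod_cast hn
  have r_pos : 0 < r := by
    have hγ0 : 0 < γ := lt_of_lt_of_le (by positivity) hγ
    have := Real.log_pos one_lt_card
    exact Nat.cast_pos.1 (lt_of_lt_of_le (by positivity) hr)
  have term_le (j : ι) : |ρc j * x j| ≤ |ρc j| := by
    rw [abs_mul]
    exact mul_le_of_le_one_right (abs_nonneg _) (hx j)
  have failure_le := exp_neg_le_one_div_pow (k := d + 1) (by positivity)
    (mul_log_le_of_mul_rpow_mul_log_le (q := q) one_lt_card.le hK hα1 hα2 (by simpa using hγ) hr)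
  have concentration := one_sub_two_mul_exp_le_card_abs_sampleEstimate_sub_sum_le_div r_pos
    (by positivity) (fun j => (term_le j).trans (hρc j)) (Finset.sum_le_sum fun j _ => term_le j)
    hα1.le hα1' (2 * α2 * (Fintype.card ι : ℝ) ^ ((q : ℝ) + δ))
  refine le_trans ?_ (concentration.trans_eq ?_)
  · linarith [mul_one_div (2 : ℝ) ((Fintype.card ι : ℝ) ^ (d + 1))]
  · simp only [abs_sub_le_iff, sampleEstimate]
    congr! 4 with R
    constructor <;> rintro ⟨h, h'⟩ <;> constructor <;> linarith

open Classical in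
/-- Sampling lemma (general, signed coefficients): with a sample of size
    r = ⌈γ·n^{1−δ}·ln n⌉ chosen uniformly with replacement, the estimation
    ρ = (n/r)·Σ_l ρ_{R_l}·x_{R_l} of ρ̂ = Σ_j ρ_j x_j satisfies
    ρ̂ − α1·ρ̄ − 2α2 n^{q+δ} ≤ ρ ≤ ρ̂ + α1·ρ̄ + 2α2 n^{q+δ}, where ρ̄ = Σ_j |ρ_j|,
    with probability at least 1 − 4/n^{d+1}. -/
theorem sampling_lemma_general (n d q : ℕ) (δ β α1 α2 γ : ℝ)
    (hn : 2 ≤ n) (hδ : 0 < δ) (hδ1 : δ ≤ 1) (hd : 1 ≤ d) (hβ : 1 ≤ β)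
    (hα1 : 0 < α1) (hα1' : α1 < 1) (hα2 : 0 < α2)
    (hγ : 6 * ((d : ℝ) + 1) * ((q : ℝ) + 1) * β / (α1 ^ 2 * α2) ≤ γ)
    (x : Fin n → ℝ) (hx : ∀ i, x i = 0 ∨ x i = 1)
    (ρc : Fin n → ℝ) (hρc : ∀ j, |ρc j| ≤ ((q : ℝ) + 1) * β * (n : ℝ) ^ q)
    (r : ℕ) (hr : r = ⌈γ * (n : ℝ) ^ ((1 : ℝ) - δ) * Real.log n⌉₊) :
    (1 : ℝ) - 4 / (n : ℝ) ^ (d + 1) ≤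
      ((Finset.univ.filter fun R : Fin r → Fin n =>
          (∑ j, ρc j * x j) - α1 * (∑ j, |ρc j|)
              - 2 * α2 * (n : ℝ) ^ ((q : ℝ) + δ) ≤
            ((n : ℝ) / r) * ∑ l, ρc (R l) * x (R l) ∧
          ((n : ℝ) / r) * ∑ l, ρc (R l) * x (R l) ≤
            (∑ j, ρc j * x j) + α1 * (∑ j, |ρc j|)
              + 2 * α2 * (n : ℝ) ^ ((q : ℝ) + δ)).card : ℝ) /
        (n : ℝ) ^ r := by
  have hγ' : ((d : ℝ) + 1) * ((q + 1) * β) / (2 * α1 * α2) ≤ γ := by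
    refine (div_le_div₀ (by positivity) ?_ (by positivity) ?_).trans hγ
    · have : 0 ≤ ((d : ℝ) + 1) * (q + 1) * β := by positivity
      linarith
    · gcongr; nlinarith
  exact (sub_le_sub_left (by gcongr; norm_num) 1).trans <|
    sampling_lemma_general_general (Fintype.card_fin n) hn (by positivity) hα1 hα1'.le hα2 hγ'
      (fun i => by rcases hx i with h | h <;> simp [h]) hρc (hr ▸ Nat.le_ceil _)
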